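/- Corollary (MinHash p2 bound for cosine similarity): let W1, W2 be nonempty subsets of Ω = {1, ..., D} with cosine similarity S, and let π be a uniformly random permutation of Ω. If S ≤ cS0 for some S0 ∈ (0,1] and c ∈ (0,1), then the collision probability Pr(min(π(W1)) = min(π(W2))) = R satisfies R ≤ cS0/(2 − cS0). -/

import Mathlib

/-!
The point at which a uniformly random permutation attains its minimum over a finite set `U` is
uniformly distributed on `U`, since composing with the transposition of `x, y ∈ U` exchanges the
permutations minimised at `x` with those minimised at `y`. The MinHashes of `W₁` and `W₂` agree
exactly when the minimiser over `W₁ ∪ W₂` lies in `W₁ ∩ W₂`, so the collision probability is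
the resemblance `R`. With `a = |W₁ ∩ W₂|` and `fᵢ = |Wᵢ|`, the AM-GM inequality
`2 √(f₁ f₂) ≤ f₁ + f₂` gives `2 a ≤ S (f₁ + f₂) = S (|W₁ ∪ W₂| + a)`, that is
`R ≤ S / (2 - S)`, and `s ↦ s / (2 - s)` is increasing below `2`.
-/

open Finset Equiv

section Similarity

variable {α : Type*} [DecidableEq α] (W₁ W₂ : Finset α)

/-- The resemblance (Jaccard similarity) `R` of two finite sets; it is `0` if both are empty. -/
noncomputable def resemblance : ℝ :=
  (#(W₁ ∩ W₂) : ℝ) / #(W₁ ∪ W₂)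

/-- The cosine similarity `S` of two finite sets, i.e. the cosine of the angle between their
indicator vectors; it is `0` if one of them is empty. -/
noncomputable def cosineSimilarity : ℝ :=
  (#(W₁ ∩ W₂) : ℝ) / √(#W₁ * #W₂)

lemma cosineSimilarity_nonneg : 0 ≤ cosineSimilarity W₁ W₂ := by
  unfold cosineSimilarity
  positivity

lemma card_inter_le_sqrt_card_mul_card : (#(W₁ ∩ W₂) : ℝ) ≤ √(#W₁ * #W₂) := by
  refine Real.le_sqrt_of_sq_le ?_
  rw [sq]
  gcongr
  exacts [inter_subset_left, inter_subset_right]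

lemma cosineSimilarity_le_one : cosineSimilarity W₁ W₂ ≤ 1 :=
  div_le_one_of_le₀ (card_inter_le_sqrt_card_mul_card W₁ W₂) (Real.sqrt_nonneg _)

lemma cosineSimilarity_mul_sqrt :
    cosineSimilarity W₁ W₂ * √(#W₁ * #W₂) = #(W₁ ∩ W₂) :=
  div_mul_cancel_of_imp fun h ↦
    le_antisymm (h ▸ card_inter_le_sqrt_card_mul_card W₁ W₂) (Nat.cast_nonneg _)

lemma two_mul_card_inter_le_cosineSimilarity_mul :
    2 * (#(W₁ ∩ W₂) : ℝ) ≤ cosineSimilarity W₁ W₂ * (#W₁ + #W₂) := by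
  have amgm : 2 * √(#W₁ * #W₂ : ℝ) ≤ #W₁ + #W₂ :=
    two_mul_le_add_of_sq_le_mul (by positivity) (by positivity) (Real.sq_sqrt (by positivity)).le
  calc 2 * (#(W₁ ∩ W₂) : ℝ)
      = cosineSimilarity W₁ W₂ * (2 * √(#W₁ * #W₂)) := by
        rw [← cosineSimilarity_mul_sqrt]; ring
    _ ≤ cosineSimilarity W₁ W₂ * (#W₁ + #W₂) :=
        mul_le_mul_of_nonneg_left amgm (cosineSimilarity_nonneg W₁ W₂)

theorem resemblance_le_cosineSimilarity_div_two_sub :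
    resemblance W₁ W₂ ≤ cosineSimilarity W₁ W₂ / (2 - cosineSimilarity W₁ W₂) := by
  have two_sub_pos : 0 < 2 - cosineSimilarity W₁ W₂ := by
    linarith [cosineSimilarity_le_one W₁ W₂]
  have card_add : (#(W₁ ∪ W₂) : ℝ) + #(W₁ ∩ W₂) = #W₁ + #W₂ := by
    exact_mod_cast card_union_add_card_inter W₁ W₂
  have two_mul_le := two_mul_card_inter_le_cosineSimilarity_mul W₁ W₂
  rw [← card_add] at two_mul_le
  refine div_le_of_le_mul₀ (Nat.cast_nonneg _)
    (div_nonneg (cosineSimilarity_nonneg W₁ W₂) two_sub_pos.le) ?_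
  rw [div_mul_eq_mul_div, le_div_iff₀ two_sub_pos]
  linarith

end Similarity

lemma div_two_sub_le_div_two_sub {s t : ℝ} (hst : s ≤ t) (ht : t < 2) :
    s / (2 - s) ≤ t / (2 - t) := by
  rw [div_le_div_iff₀ (by linarith) (by linarith)]
  linarith

section MinHash

variable {α : Type*} [LinearOrder α]

/-- The MinHash `min (π(W))` of a nonempty finite set `W` under the permutation `π`. -/
def minHash (π : Perm α) {W : Finset α} (hW : W.Nonempty) : α :=
  (W.image π).min' (hW.image π)

/-- The element of `W` at which `π` attains its minimum over `W`, i.e. whose label under `π` is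
the MinHash of `W`. -/
def minHashArg (π : Perm α) {W : Finset α} (hW : W.Nonempty) : α :=
  π.symm (minHash π hW)

variable {π : Perm α} {U W₁ W₂ : Finset α} {x y : α}

lemma apply_minHashArg (hU : U.Nonempty) : π (minHashArg π hU) = minHash π hU :=
  π.apply_symm_apply _

lemma minHashArg_eq_iff (hU : U.Nonempty) :
    minHashArg π hU = x ↔ x ∈ U ∧ ∀ y ∈ U, π x ≤ π y := by
  simp [minHashArg, minHash, symm_apply_eq, min'_eq_iff]

lemma minHashArg_mem (hU : U.Nonempty) : minHashArg π hU ∈ U :=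
  ((minHashArg_eq_iff hU).1 rfl).1

lemma apply_minHashArg_le (hU : U.Nonempty) (hx : x ∈ U) : π (minHashArg π hU) ≤ π x :=
  ((minHashArg_eq_iff hU).1 rfl).2 x hx

lemma minHashArg_eq_of_subset (hU : U.Nonempty) (hW : W₁.Nonempty) (hWU : W₁ ⊆ U)
    (hmem : minHashArg π hU ∈ W₁) : minHashArg π hW = minHashArg π hU :=
  (minHashArg_eq_iff hW).2 ⟨hmem, fun _ hy ↦ apply_minHashArg_le hU (hWU hy)⟩

theorem minHash_eq_iff_minHashArg_union_mem_inter (h₁ : W₁.Nonempty) (h₂ : W₂.Nonempty) :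
    minHash π h₁ = minHash π h₂ ↔ minHashArg π (h₁.inl (t := W₂)) ∈ W₁ ∩ W₂ := by
  constructor
  · intro h
    have arg_eq : minHashArg π h₁ = minHashArg π h₂ := congrArg π.symm h
    have arg_mem : minHashArg π h₁ ∈ W₁ ∩ W₂ :=
      mem_inter.2 ⟨minHashArg_mem h₁, arg_eq ▸ minHashArg_mem h₂⟩
    have arg_union : minHashArg π (h₁.inl (t := W₂)) = minHashArg π h₁ :=
      (minHashArg_eq_iff _).2 ⟨inter_subset_union arg_mem, forall_mem_union.2
        ⟨fun _ ↦ apply_minHashArg_le h₁, fun _ ↦ arg_eq ▸ apply_minHashArg_le h₂⟩⟩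
    rwa [arg_union]
  · intro h
    rw [← apply_minHashArg h₁, ← apply_minHashArg h₂,
      minHashArg_eq_of_subset _ h₁ subset_union_left (mem_inter.1 h).1,
      minHashArg_eq_of_subset _ h₂ subset_union_right (mem_inter.1 h).2]

lemma minHashArg_mul {σ : Perm α} (hU : U.Nonempty) (hσ : ∀ z, σ z ∈ U ↔ z ∈ U) :
    minHashArg (π * σ) hU = σ.symm (minHashArg π hU) := by
  refine (minHashArg_eq_iff hU).2 ⟨?_, fun z hz ↦ ?_⟩
  · rw [← hσ, apply_symm_apply]
    exact minHashArg_mem hU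
  · rw [Perm.mul_apply, Perm.mul_apply, apply_symm_apply]
    exact apply_minHashArg_le hU ((hσ z).2 hz)

variable [Fintype α]

lemma card_fiber_minHashArg_eq (hU : U.Nonempty) (hx : x ∈ U) (hy : y ∈ U) :
    #{π : Perm α | minHashArg π hU = x} = #{π : Perm α | minHashArg π hU = y} := by
  have swap_mem_iff (z : α) : swap x y z ∈ U ↔ z ∈ U := by grind
  refine card_equiv (Equiv.mulRight (swap x y)) fun π ↦ ?_
  simp [minHashArg_mul hU swap_mem_iff, swap_apply_eq_iff]

theorem card_minHashArg_mem_mul_card {T : Finset α} (hU : U.Nonempty) (hT : T ⊆ U) :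
    #{π : Perm α | minHashArg π hU ∈ T} * #U = #T * Fintype.card (Perm α) := by
  have ⟨x, hx⟩ := hU
  have card_mem {V : Finset α} (hV : V ⊆ U) :
      #{π : Perm α | minHashArg π hU ∈ V} = #V * #{π : Perm α | minHashArg π hU = x} := by
    rw [← sum_card_fiberwise_eq_card_filter]
    exact sum_const_nat fun y hy ↦ card_fiber_minHashArg_eq hU (hV hy) hx
  have card_perm : Fintype.card (Perm α) = #U * #{π : Perm α | minHashArg π hU = x} := by
    rw [← card_mem Subset.rfl, ← card_univ, filter_true_of_mem fun _ _ ↦ minHashArg_mem hU]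
  rw [card_mem hT, card_perm]
  ring

/-- The probability that the MinHashes of `W₁` and `W₂` agree under a uniformly random
permutation, as the proportion of permutations for which they do. -/
noncomputable def collisionProb (h₁ : W₁.Nonempty) (h₂ : W₂.Nonempty) : ℝ :=
  (#{π : Perm α | minHash π h₁ = minHash π h₂} : ℝ) / Fintype.card (Perm α)

theorem collisionProb_eq_resemblance (h₁ : W₁.Nonempty) (h₂ : W₂.Nonempty) :
    collisionProb h₁ h₂ = resemblance W₁ W₂ := by
  have union_ne_zero : (#(W₁ ∪ W₂) : ℝ) ≠ 0 := Nat.cast_ne_zero.2 h₁.inl.card_ne_zero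
  have perm_ne_zero : (Fintype.card (Perm α) : ℝ) ≠ 0 := Nat.cast_ne_zero.2 Fintype.card_ne_zero
  rw [collisionProb, resemblance, div_eq_div_iff perm_ne_zero union_ne_zero]
  simp only [minHash_eq_iff_minHashArg_union_mem_inter]
  exact_mod_cast card_minHashArg_mem_mul_card h₁.inl inter_subset_union

theorem minhash_p2_bound_general (h₁ : W₁.Nonempty) (h₂ : W₂.Nonempty) {t : ℝ} (ht : t < 2)
    (hS : cosineSimilarity W₁ W₂ ≤ t) : collisionProb h₁ h₂ ≤ t / (2 - t) :=
  calc collisionProb h₁ h₂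
      = resemblance W₁ W₂ := collisionProb_eq_resemblance h₁ h₂
    _ ≤ cosineSimilarity W₁ W₂ / (2 - cosineSimilarity W₁ W₂) :=
        resemblance_le_cosineSimilarity_div_two_sub W₁ W₂
    _ ≤ t / (2 - t) := div_two_sub_le_div_two_sub hS ht

end MinHash

/-- MinHash `p2` bound for cosine similarity: if the cosine similarity `S` of nonempty
`W1, W2 ⊆ Fin D` satisfies `S ≤ c·S0` for `S0 ∈ (0,1]` and `c ∈ (0,1)`, then the MinHash
collision probability is at most `c·S0 / (2 - c·S0)`. -/
theorem minhash_p2_bound (D : ℕ) (W1 W2 : Finset (Fin D))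
    (h1 : W1.Nonempty) (h2 : W2.Nonempty) (S0 c : ℝ)
    (hS0 : 0 < S0) (hS0' : S0 ≤ 1) (hc : 0 < c) (hc' : c < 1)
    (hS : ((W1 ∩ W2).card : ℝ) / Real.sqrt ((W1.card : ℝ) * (W2.card : ℝ)) ≤ c * S0) :
    ((Finset.univ.filter (fun π : Equiv.Perm (Fin D) =>
        (W1.image π).min' (h1.image π) = (W2.image π).min' (h2.image π))).card : ℝ) /
      (Fintype.card (Equiv.Perm (Fin D)) : ℝ) ≤ c * S0 / (2 - c * S0) := by
  have ht : c * S0 < 2 := by nlinarith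
  exact minhash_p2_bound_general h1 h2 ht hS
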